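/- Let A = Λ(x₁, x₂, x₃, z₁₂, z₁₃, z₂₃) be the exterior algebra over ℚ on six generators, with the derivation d determined by dxᵢ = 0 and dz_{ij} = xᵢ∧x_j for 1 ≤ i < j ≤ 3. Then d∘d = 0 and the total dimension of H(A, d) over ℚ equals 36. -/

import Mathlib

noncomputable section

/-- The exterior algebra over `ℚ` on six generators `x₁, x₂, x₃, z₁₂, z₁₃, z₂₃`
(all odd). -/
abbrev A6 : Type := ExteriorAlgebra ℚ (Fin 6 → ℚ)

/-- The six generators: `x₁ = gen6 0`, `x₂ = gen6 1`, `x₃ = gen6 2`,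
`z₁₂ = gen6 3`, `z₁₃ = gen6 4`, `z₂₃ = gen6 5`. -/
def gen6 (i : Fin 6) : A6 := ExteriorAlgebra.ι ℚ (Pi.single i 1)

/-- The `i`-th graded piece of the exterior algebra, as a submodule. -/
def grade6 (i : ℕ) : Submodule ℚ A6 :=
  LinearMap.range (ExteriorAlgebra.ι ℚ : (Fin 6 → ℚ) →ₗ[ℚ] A6) ^ i

/-- The total dimension of the cohomology `ker d / im d` of `(V, d)`. -/
def cohomDim {V : Type} [AddCommGroup V] [Module ℚ V] (d : V →ₗ[ℚ] V) : ℕ :=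
  Module.finrank ℚ
    (↥(LinearMap.ker d) ⧸ (LinearMap.range d).comap (LinearMap.ker d).subtype)

open Module

/-- The product of the generators listed in `l`. -/
def monomial6 (l : List (Fin 6)) : A6 := (l.map gen6).prod

/-- A formal integer combination of lists of generators. -/
abbrev FormalSum : Type := List (ℤ × List (Fin 6))

namespace FormalSum

/-- The element of the exterior algebra represented by a formal sum. -/
def eval (p : FormalSum) : A6 := (p.map fun t => t.1 • monomial6 t.2).sum

/-- The formal sum for `gen6 i * monomial6 l`, inserting `i` in increasing order. -/
def insertGen (i : Fin 6) : List (Fin 6) → FormalSum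
  | [] => [(1, [i])]
  | j :: l =>
    if i < j then [(1, i :: j :: l)]
    else if i = j then []
    else (insertGen i l).map fun t => (-t.1, j :: t.2)

/-- Left multiplication of a formal sum by the generator `i`. -/
def mulGen (i : Fin 6) (p : FormalSum) : FormalSum :=
  p.flatMap fun t => (insertGen i t.2).map fun u => (t.1 * u.1, u.2)

/-- The negative of a formal sum. -/
def neg (p : FormalSum) : FormalSum := p.map fun t => (-t.1, t.2)

/-- The formal sum for `d (gen6 i) * monomial6 l`. -/
def diffGenMul (i : Fin 6) (l : List (Fin 6)) : FormalSum :=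
  match i with
  | 3 => mulGen 0 (mulGen 1 [(1, l)])
  | 4 => mulGen 0 (mulGen 2 [(1, l)])
  | 5 => mulGen 1 (mulGen 2 [(1, l)])
  | _ => []

/-- The formal sum for `d (monomial6 l)`. -/
def diff : List (Fin 6) → FormalSum
  | [] => []
  | i :: l => diffGenMul i l ++ neg (mulGen i (diff l))

@[simp]
lemma eval_nil : eval [] = 0 := rfl

@[simp]
lemma eval_cons (t : ℤ × List (Fin 6)) (p : FormalSum) :
    eval (t :: p) = t.1 • monomial6 t.2 + eval p := by
  simp [eval]

@[simp]
lemma eval_append (p q : FormalSum) : eval (p ++ q) = eval p + eval q := by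
  simp [eval]

lemma eval_neg (p : FormalSum) : eval (neg p) = -eval p := by
  induction p with
  | nil => simp [neg]
  | cons t p ih =>
    simp only [neg, List.map_cons, eval_cons] at ih ⊢
    rw [ih, neg_smul, neg_add]

lemma eval_map_smul (c : ℤ) (p : FormalSum) :
    eval (p.map fun u => (c * u.1, u.2)) = c • eval p := by
  induction p with
  | nil => simp
  | cons t p ih => simp [ih, mul_smul]

end FormalSum

@[simp]
lemma monomial6_nil : monomial6 [] = 1 := rfl

lemma monomial6_cons (i : Fin 6) (l : List (Fin 6)) :
    monomial6 (i :: l) = gen6 i * monomial6 l := by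
  simp [monomial6]

lemma gen6_mul_self (i : Fin 6) : gen6 i * gen6 i = 0 := ExteriorAlgebra.ι_sq_zero _

lemma gen6_mul_swap (i j : Fin 6) : gen6 i * gen6 j = -(gen6 j * gen6 i) :=
  eq_neg_of_add_eq_zero_left (ExteriorAlgebra.ι_add_mul_swap _ _)

namespace FormalSum

lemma eval_map_neg_cons (j : Fin 6) (p : FormalSum) :
    eval (p.map fun t => (-t.1, j :: t.2)) = -(gen6 j * eval p) := by
  induction p with
  | nil => simp
  | cons t p ih =>
    simp only [List.map_cons, eval_cons, ih, monomial6_cons, mul_add, mul_smul_comm, neg_smul,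
      neg_add]

lemma eval_insertGen (i : Fin 6) (l : List (Fin 6)) :
    eval (insertGen i l) = gen6 i * monomial6 l := by
  induction l with
  | nil => simp [insertGen, monomial6_cons]
  | cons j l ih =>
    unfold insertGen
    split_ifs with h₁ h₂
    · simp [monomial6_cons]
    · rw [h₂, monomial6_cons, ← mul_assoc, gen6_mul_self, zero_mul, eval_nil]
    · rw [eval_map_neg_cons, ih, monomial6_cons, ← mul_assoc, ← mul_assoc, gen6_mul_swap i j,
        neg_mul]

lemma eval_mulGen (i : Fin 6) (p : FormalSum) : eval (mulGen i p) = gen6 i * eval p := by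
  induction p with
  | nil => simp [mulGen]
  | cons t p ih =>
    simp only [mulGen, List.flatMap_cons, eval_append] at ih ⊢
    rw [ih, eval_map_smul, eval_insertGen, eval_cons, mul_add, mul_smul_comm]

/-- Monomials whose differentials form a basis of the boundaries. -/
def source : Fin 14 → List (Fin 6) :=
  ![[3], [4], [5], [3, 4], [3, 5], [4, 5], [3, 4, 5], [1, 4],
    [0, 3, 5], [0, 4, 5], [1, 4, 5], [0, 4, 3, 5], [1, 4, 3, 5], [2, 4, 3, 5]]

/-- A monomial with coefficient one in the differential of `source k`, and not occurring in that
of any other `source l`. -/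
def target : Fin 14 → Finset (Fin 6) :=
  ![{0, 1}, {0, 2}, {1, 2}, {0, 1, 4}, {0, 1, 5}, {0, 2, 5}, {0, 1, 4, 5}, {0, 1, 2},
    {0, 1, 2, 3}, {0, 1, 2, 4}, {0, 1, 2, 5}, {0, 1, 2, 3, 4}, {0, 1, 2, 3, 5}, {0, 1, 2, 4, 5}]

/-- The coefficient of the monomial indexed by `s`, for a formal sum of increasing lists. -/
def coeff (p : FormalSum) (s : Finset (Fin 6)) : ℤ :=
  (p.map fun t => if t.2.toFinset = s then t.1 else 0).sum

/-- The increasing list of the elements of `s`. -/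
def sorted (s : Finset (Fin 6)) : List (Fin 6) := [0, 1, 2, 3, 4, 5].filter (· ∈ s)

lemma pairwise_sorted (s : Finset (Fin 6)) : (sorted s).Pairwise (· < ·) :=
  List.Pairwise.filter _ (by decide)

lemma toFinset_sorted (s : Finset (Fin 6)) : (sorted s).toFinset = s := by
  ext i
  fin_cases i <;> simp [sorted]

lemma diff_diff_sorted : ∀ s : Finset (Fin 6), ∀ t ∈ diff (sorted s), diff t.2 = [] := by
  decide +kernel

lemma diff_sorted_cases : ∀ s : Finset (Fin 6), diff (sorted s) = [] ∨
    ∃ k, diff (sorted s) = diff (source k) ∨ diff (sorted s) = neg (diff (source k)) := by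
  decide +kernel

lemma pairwise_diff_source :
    ∀ k, ∀ t ∈ diff (source k), t.2.Pairwise (· < ·) := by
  decide +kernel

lemma coeff_diff_source :
    ∀ k l, coeff (diff (source k)) (target l) = if k = l then 1 else 0 := by
  decide +kernel

end FormalSum

/-- The basis of the exterior algebra consisting of increasing products of generators. -/
def basis6 : Basis (Finset (Fin 6)) ℚ A6 := (Pi.basisFun ℚ (Fin 6)).ExteriorAlgebra

lemma basis6_toFinset {l : List (Fin 6)} (hl : l.Pairwise (· < ·)) :
    basis6 l.toFinset = monomial6 l := by
  have hcard : l.toFinset.card = l.length := List.toFinset_card_of_nodup hl.nodup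
  have hget : l.get = l.toFinset.orderEmbOfFin hcard :=
    Finset.orderEmbOfFin_unique hcard (fun i => List.mem_toFinset.2 (l.get_mem i))
      hl.sortedLT.strictMono_get
  rw [basis6, ExteriorAlgebra.basis_apply_ofCard _ hcard, ExteriorAlgebra.ιMulti_family,
    ExteriorAlgebra.ιMulti_apply]
  change (List.ofFn fun i => ExteriorAlgebra.ι ℚ
    (Pi.basisFun ℚ (Fin 6) (l.toFinset.orderEmbOfFin hcard i))).prod = _
  rw [← hget, monomial6]
  congr 1
  apply List.ext_get <;> simp [gen6]

namespace FormalSum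

lemma basis6_repr_eval (p : FormalSum) (hp : ∀ t ∈ p, t.2.Pairwise (· < ·))
    (s : Finset (Fin 6)) : basis6.repr (eval p) s = coeff p s := by
  induction p with
  | nil => simp [coeff]
  | cons t p ih =>
    rw [List.forall_mem_cons] at hp
    have := ih hp.2
    simp only [coeff] at this
    rw [eval_cons, map_add, Finsupp.add_apply, this, ← basis6_toFinset hp.1, map_zsmul,
      Basis.repr_self, Finsupp.smul_apply, Finsupp.single_apply]
    simp [coeff]

lemma linearIndependent_eval_diff_source :
    LinearIndependent ℚ fun k => eval (diff (source k)) := by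
  rw [Fintype.linearIndependent_iff]
  intro g hg l
  have := congrArg (fun x => basis6.repr x (target l)) hg
  simpa [basis6_repr_eval _ (pairwise_diff_source _), coeff_diff_source] using this

end FormalSum

lemma cohomDim_add_two_mul_finrank_range {V : Type} [AddCommGroup V] [Module ℚ V]
    [FiniteDimensional ℚ V] (d : V →ₗ[ℚ] V) (hd : d ∘ₗ d = 0) :
    cohomDim d + 2 * finrank ℚ (LinearMap.range d) = finrank ℚ V := by
  have hle : LinearMap.range d ≤ LinearMap.ker d := LinearMap.range_le_ker_iff.2 hd
  have h₁ := Submodule.finrank_quotient_add_finrank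
    ((LinearMap.range d).comap (LinearMap.ker d).subtype)
  have h₂ := (Submodule.comapSubtypeEquivOfLe hle).finrank_eq
  have h₃ := d.finrank_range_add_finrank_ker
  unfold cohomDim
  omega

open FormalSum in
lemma apply_monomial6 (d : A6 →ₗ[ℚ] A6)
    (hone : d 1 = 0) (hgen : ∀ i b, d (gen6 i * b) = d (gen6 i) * b - gen6 i * d b)
    (hdiff : ∀ i l, eval (diffGenMul i l) = d (gen6 i) * monomial6 l) (l : List (Fin 6)) :
    d (monomial6 l) = eval (diff l) := by
  induction l with
  | nil => simpa [diff] using hone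
  | cons i l ih =>
    rw [monomial6_cons, hgen, ih, diff, eval_append, eval_neg, eval_mulGen, hdiff, sub_eq_add_neg]

open FormalSum

/-- For `Λ(x₁,x₂,x₃,z₁₂,z₁₃,z₂₃)` over `ℚ` with the derivation `d xᵢ = 0`, `d z_{ij} = xᵢ ∧ x_j`, we have `d ∘ d = 0` and `dim H(A, d) = 36`. -/
theorem stmt_2 (d : A6 →ₗ[ℚ] A6)
    (hleibniz : ∀ (i : ℕ) (a b : A6), a ∈ grade6 i →
      d (a * b) = d a * b + ((-1 : ℚ) ^ i) • (a * d b))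
    (hx1 : d (gen6 0) = 0) (hx2 : d (gen6 1) = 0) (hx3 : d (gen6 2) = 0)
    (hz12 : d (gen6 3) = gen6 0 * gen6 1)
    (hz13 : d (gen6 4) = gen6 0 * gen6 2)
    (hz23 : d (gen6 5) = gen6 1 * gen6 2) :
    d ∘ₗ d = 0 ∧ cohomDim d = 36 := by
  have hone : d 1 = 0 := by
    simpa using hleibniz 0 1 1 (by simp [grade6])
  have hgen : ∀ i b, d (gen6 i * b) = d (gen6 i) * b - gen6 i * d b := by
    intro i b
    have := hleibniz 1 (gen6 i) b (by simp [grade6, gen6])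
    rw [this, pow_one, neg_one_smul, sub_eq_add_neg]
  have hdiff : ∀ i l, eval (diffGenMul i l) = d (gen6 i) * monomial6 l := by
    intro i l
    fin_cases i <;>
      simp [diffGenMul, eval_mulGen, hx1, hx2, hx3, hz12, hz13, hz23, mul_assoc]
  have hd := apply_monomial6 d hone hgen hdiff
  have hbasis (s : Finset (Fin 6)) : basis6 s = monomial6 (sorted s) := by
    rw [← basis6_toFinset (pairwise_sorted s), toFinset_sorted]
  have hsq : d ∘ₗ d = 0 := by
    refine basis6.ext fun s => ?_
    rw [LinearMap.comp_apply, hbasis, hd, LinearMap.zero_apply, eval, map_list_sum, List.map_map]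
    refine List.sum_eq_zero fun x hx => ?_
    obtain ⟨t, ht, rfl⟩ := List.mem_map.1 hx
    rw [Function.comp_apply, map_zsmul, hd, diff_diff_sorted s t ht, eval_nil, smul_zero]
  have hrange : LinearMap.range d =
      Submodule.span ℚ (Set.range fun k => eval (diff (source k))) := by
    apply le_antisymm
    · rw [LinearMap.range_eq_map, ← basis6.span_eq, Submodule.map_span_le]
      rintro _ ⟨s, rfl⟩
      rw [hbasis, hd]
      obtain h | ⟨k, h | h⟩ := diff_sorted_cases s
      · rw [h]
        exact zero_mem _
      · rw [h]
        exact Submodule.subset_span ⟨k, rfl⟩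
      · rw [h, eval_neg]
        exact neg_mem (Submodule.subset_span ⟨k, rfl⟩)
    · rw [Submodule.span_le]
      rintro _ ⟨k, rfl⟩
      exact ⟨monomial6 (source k), hd _⟩
  have : FiniteDimensional ℚ A6 := basis6.finiteDimensional_of_finite
  have hdim := cohomDim_add_two_mul_finrank_range d hsq
  rw [hrange, finrank_span_eq_card linearIndependent_eval_diff_source,
    finrank_eq_card_basis basis6, Fintype.card_finset, Fintype.card_fin, Fintype.card_fin] at hdim
  exact ⟨hsq, by omega⟩
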